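/- Let m ≥ 3 be an integer with an odd factor, let a_1,…,a_m ∈ T = {t·(cos φ, sin φ) : t ≥ 0, φ ∈ (0,π]} ⊂ ℝ², and suppose A = [a_1,…,a_m]ᵀ satisfies β_A = inf{β_M : M ∈ ℝ^{m×2}} (an optimal frame). Then there exist c > 0, φ ∈ ℝ, a permutation σ of {1,…,m}, and ε = (ε_1,…,ε_m) ∈ {±1}^m with ∑_{j=1}^m ε_j·e^{ijπ/m} = 0, such that f(a_{σ(j)}) = c·ε_j·(cos(2φ + jπ/m), sin(2φ + jπ/m)) for every j; equivalently, after a common rescaling and a common rotation, {a_1,…,a_m} = {ν_j : ε_j = 1} ∪ {ν_j^⊥ : ε_j = −1}, where ν_j = (cos(jπ/(2m)), sin(jπ/(2m))) and ν_j^⊥ = (cos(jπ/(2m) + π/2), sin(jπ/(2m) + π/2)). -/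

import Mathlib

noncomputable section

open Real
open scoped RealInnerProductSpace ENNReal

/-- ℝ² as a Euclidean space. -/
abbrev E2 : Type := EuclideanSpace ℝ (Fin 2)

/-- The vector `(x, y)` in ℝ². -/
def vec2 (x y : ℝ) : E2 := (WithLp.equiv 2 (Fin 2 → ℝ)).symm ![x, y]

/-- The coordinates of a vector in ℝ². -/
def toFun2 (v : E2) : Fin 2 → ℝ := WithLp.equiv 2 (Fin 2 → ℝ) v

/-- The phaseless measurement map `Φ_A(x) = (|⟨a_j, x⟩|)_j`. -/
def PhiMap {m : ℕ} (a : Fin m → E2) (x : E2) : EuclideanSpace ℝ (Fin m) :=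
  (WithLp.equiv 2 (Fin m → ℝ)).symm fun j => |⟪a j, x⟫|

/-- The distance `dist(x,y) = min ‖x − y‖ ‖x + y‖` (real phase retrieval distance). -/
def pdist (x y : E2) : ℝ := min ‖x - y‖ ‖x + y‖

/-- The set of Lipschitz ratios of the phaseless measurement map. -/
def ratioSet {m : ℕ} (a : Fin m → E2) : Set ℝ :=
  {r | ∃ x y : E2, pdist x y ≠ 0 ∧ r = ‖PhiMap a x - PhiMap a y‖ / pdist x y}

/-- The optimal lower Lipschitz constant `L_A`. -/
def lipL {m : ℕ} (a : Fin m → E2) : ℝ := sInf (ratioSet a)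

/-- The optimal upper Lipschitz constant `U_A`. -/
def lipU {m : ℕ} (a : Fin m → E2) : ℝ := sSup (ratioSet a)

/-- The condition number `β_A = U_A / L_A`, with `β_A = +∞` when `L_A = 0`. -/
def condNum {m : ℕ} (a : Fin m → E2) : ℝ≥0∞ :=
  if lipL a = 0 then ⊤ else ENNReal.ofReal (lipU a / lipL a)

/-- An edge family: nonzero vectors with pairwise distinct directions summing to zero
(the edge vectors of a strictly convex polygon). -/
def IsEdgeFamily {m : ℕ} (e : Fin m → E2) : Prop :=
  (∀ j, e j ≠ 0) ∧
  (∀ i j : Fin m, i ≠ j → ‖e i‖⁻¹ • e i ≠ ‖e j‖⁻¹ • e j) ∧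
  ∑ j, e j = 0

/-- The diameter-to-perimeter ratio of the polygon with edge vectors `e`. -/
def rRatio {m : ℕ} (e : Fin m → E2) : ℝ :=
  sSup {s | ∃ u : E2, ‖u‖ = 1 ∧ s = ∑ j, |⟪e j, u⟫|} / (2 * ∑ j, ‖e j‖)

/-- An optimal edge family: minimizes `rRatio` among all edge families of size `m`. -/
def IsOptimalEdgeFamily {m : ℕ} (e : Fin m → E2) : Prop :=
  IsEdgeFamily e ∧ ∀ e' : Fin m → E2, IsEdgeFamily e' → rRatio e ≤ rRatio e'

/-- The complex square map on ℝ² ≅ ℂ: `f(t·(cos φ, sin φ)) = t²·(cos 2φ, sin 2φ)`. -/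
def csq (v : E2) : E2 :=
  vec2 (toFun2 v 0 ^ 2 - toFun2 v 1 ^ 2) (2 * toFun2 v 0 * toFun2 v 1)

/-- The harmonic frame `E_m`: the `j`-th row is `(cos((j−1)π/m), sin((j−1)π/m))`, `j = 1,…,m`. -/
def harmonicFrame (m : ℕ) : Fin m → E2 :=
  fun j => vec2 (Real.cos ((j : ℕ) * π / m)) (Real.sin ((j : ℕ) * π / m))

/-!
Let `z j` be the complex square of `a j`. Since `2 ⟪a, u⟫² = |a²| |u|² + ⟪a², u²⟫`, the Lipschitz
constants become geometry of the `z j`: `2 U² = ∑ ‖z j‖ + ‖∑ z j‖`, while `∑ ‖z j‖ - 2 L²` bounds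
the support function `w ↦ ∑ |⟪z j, w⟫|` of the zonogon `∑ [-z j, z j]` on the unit circle, and is
the sharp bound when `∑ z j = 0`. Sorting the edge directions and combining Abel summation over the
vertices with Jensen's inequality for the chords of the circle gives Reinhardt's inequality: a
zonogon with circumradius at most `R` has `∑ ‖z j‖ ≤ R m sin (π / (2 m))`, with equality only for
edges of equal length in equally spaced directions. Hence `β_A` is bounded below, and equality also
forces `∑ z j = 0`. If `m` has an odd factor, suitable signs balance the `m` equally spaced
directions, so the bound is attained and every optimal frame is an equality case.
-/

section Zonogon

variable {E : Type*} [NormedAddCommGroup E] [InnerProductSpace ℝ E] {m : ℕ} {R : ℝ}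

/-- The `k`-th vertex `-z₀ - ⋯ - z_{k-1} + z_k + ⋯ + z_{m-1}` of the zonogon
`∑ j < m, [-z j, z j]`, whose edges are `-2 z k` when the directions `z j` are sorted. -/
def zonogonVertex (m : ℕ) (z : ℕ → E) (k : ℕ) : E :=
  ∑ j ∈ Finset.range m, z j - (2 : ℝ) • ∑ j ∈ Finset.range k, z j

lemma zonogonVertex_sub_succ (z : ℕ → E) (k : ℕ) :
    zonogonVertex m z k - zonogonVertex m z (k + 1) = (2 : ℝ) • z k := by
  simp only [zonogonVertex, Finset.sum_range_succ, smul_add]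
  abel

lemma zonogonVertex_self (z : ℕ → E) : zonogonVertex m z m = -zonogonVertex m z 0 := by
  simp only [zonogonVertex, Finset.range_zero, Finset.sum_empty, smul_zero, two_smul]
  abel

lemma norm_zonogonVertex_le {z : ℕ → E} (hR₀ : 0 ≤ R)
    (hR : ∀ w, ∑ j ∈ Finset.range m, |⟪z j, w⟫| ≤ R * ‖w‖) {k : ℕ} (hk : k ≤ m) :
    ‖zonogonVertex m z k‖ ≤ R := by
  set V := zonogonVertex m z k with hV
  have hsplit : V = ∑ j ∈ Finset.Ico k m, z j - ∑ j ∈ Finset.range k, z j := by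
    rw [hV, zonogonVertex, ← Finset.sum_range_add_sum_Ico z hk, two_smul]
    abel
  have hsq : ‖V‖ * ‖V‖ ≤ R * ‖V‖ := calc
    ‖V‖ * ‖V‖ = ∑ j ∈ Finset.Ico k m, ⟪z j, V⟫ - ∑ j ∈ Finset.range k, ⟪z j, V⟫ := by
      rw [← sum_inner, ← sum_inner, ← inner_sub_left, ← hsplit, real_inner_self_eq_norm_mul_norm]
    _ ≤ ∑ j ∈ Finset.Ico k m, |⟪z j, V⟫| + ∑ j ∈ Finset.range k, |⟪z j, V⟫| := by
      rw [sub_eq_add_neg, ← Finset.sum_neg_distrib]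
      gcongr
      exacts [le_abs_self _, neg_le_abs _]
    _ = ∑ j ∈ Finset.range m, |⟪z j, V⟫| := by
      rw [add_comm, Finset.sum_range_add_sum_Ico _ hk]
    _ ≤ R * ‖V‖ := hR V
  rcases (norm_nonneg V).eq_or_lt with h | h
  · rwa [← h]
  · exact le_of_mul_le_mul_right hsq h

/-- Abel summation; the boundary terms cancel because `zonogonVertex m z` and `e` both change sign
between `0` and `m`. -/
lemma sum_inner_zonogonVertex (z e : ℕ → E) (he : e m = -e 0) :
    ∑ k ∈ Finset.range m, ⟪zonogonVertex m z (k + 1), e (k + 1) - e k⟫ =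
      2 * ∑ k ∈ Finset.range m, ⟪z k, e k⟫ := by
  let V := zonogonVertex m z
  have hself : V m = -V 0 := zonogonVertex_self z
  have hstep (k : ℕ) : ⟪V (k + 1), e (k + 1) - e k⟫ =
      (⟪V (k + 1), e (k + 1)⟫ - ⟪V k, e k⟫) + 2 * ⟪z k, e k⟫ := by
    rw [← real_inner_smul_left, ← zonogonVertex_sub_succ (m := m), inner_sub_right,
      inner_sub_left]
    ring
  rw [Finset.sum_congr rfl fun k _ => hstep k, Finset.sum_add_distrib,
    Finset.sum_range_sub (fun k => ⟪V k, e k⟫), ← Finset.mul_sum, he, hself, inner_neg_neg,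
    sub_self, zero_add]

lemma inner_zonogonVertex_le {z : ℕ → E} (hV : ∀ k ≤ m, ‖zonogonVertex m z k‖ ≤ R) {k : ℕ}
    (hk : k < m) (c : E) : ⟪zonogonVertex m z (k + 1), c⟫ ≤ R * ‖c‖ :=
  (real_inner_le_norm _ _).trans (mul_le_mul_of_nonneg_right (hV _ hk) (norm_nonneg _))

lemma smul_eq_smul_of_inner_eq {V c : E} (hV : ‖V‖ ≤ R) (hc : c ≠ 0) (h : ⟪V, c⟫ = R * ‖c‖) :
    ‖c‖ • V = R • c := by
  have hnorm : ‖V‖ = R := hV.antisymm <| le_of_mul_le_mul_right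
    (h ▸ real_inner_le_norm V c) (norm_pos_iff.mpr hc)
  rw [← hnorm] at h ⊢
  exact inner_eq_norm_mul_iff_real.mp h

lemma inner_sub_self_of_norm_eq_one {x y : E} (hx : ‖x‖ = 1) (hy : ‖y‖ = 1) :
    ⟪x - y, x⟫ = ‖x - y‖ ^ 2 / 2 := by
  rw [norm_sub_sq_real, inner_sub_left, real_inner_self_eq_norm_sq, hx, hy, real_inner_comm]
  ring

variable {r : ℕ → ℝ} {e : ℕ → E}

lemma two_mul_sum_eq_sum_inner_zonogonVertex (he₁ : ∀ k, ‖e k‖ = 1) (he : e m = -e 0) :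
    2 * ∑ k ∈ Finset.range m, r k =
      ∑ k ∈ Finset.range m, ⟪zonogonVertex m (fun j => r j • e j) (k + 1), e (k + 1) - e k⟫ := by
  simp [sum_inner_zonogonVertex _ e he, real_inner_smul_left, he₁]

lemma two_mul_sum_le_mul_sum_norm_sub (he₁ : ∀ k, ‖e k‖ = 1) (he : e m = -e 0)
    (hV : ∀ k ≤ m, ‖zonogonVertex m (fun j => r j • e j) k‖ ≤ R) :
    2 * ∑ k ∈ Finset.range m, r k ≤ R * ∑ k ∈ Finset.range m, ‖e (k + 1) - e k‖ := by
  rw [two_mul_sum_eq_sum_inner_zonogonVertex he₁ he, Finset.mul_sum]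
  exact Finset.sum_le_sum fun k hk => inner_zonogonVertex_le hV (Finset.mem_range.mp hk) _

lemma two_mul_eq_of_two_mul_sum_eq {d : ℝ} (hd : 0 < d) (he₁ : ∀ k, ‖e k‖ = 1) (he : e m = -e 0)
    (hchord : ∀ k < m, ‖e (k + 1) - e k‖ = d)
    (hV : ∀ k ≤ m, ‖zonogonVertex m (fun j => r j • e j) k‖ ≤ R)
    (heq : 2 * ∑ k ∈ Finset.range m, r k = R * ∑ k ∈ Finset.range m, ‖e (k + 1) - e k‖) :
    ∀ k < m, 2 * r k = R * d := by
  set V := zonogonVertex m fun j => r j • e j with hVdef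
  have hinner : ∀ k < m, ⟪V (k + 1), e (k + 1) - e k⟫ = R * ‖e (k + 1) - e k‖ := by
    rw [two_mul_sum_eq_sum_inner_zonogonVertex he₁ he, Finset.mul_sum] at heq
    simpa using (Finset.sum_eq_sum_iff_of_le fun k hk =>
      inner_zonogonVertex_le hV (Finset.mem_range.mp hk) _).mp heq
  have hsmul : ∀ k < m, d • V (k + 1) = R • (e (k + 1) - e k) := fun k hk => by
    rw [← hchord k hk]
    exact smul_eq_smul_of_inner_eq (hV _ hk)
      (norm_pos_iff.mp (hd.trans_eq (hchord k hk).symm)) (hinner k hk)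
  have hnext : ∀ k < m, 2 * ⟪V (k + 1), e (k + 1)⟫ = R * d := fun k hk => by
    have h := congrArg (⟪·, e (k + 1)⟫) (hsmul k hk)
    simp only [real_inner_smul_left, inner_sub_self_of_norm_eq_one (he₁ _) (he₁ _),
      hchord k hk] at h
    exact mul_left_cancel₀ hd.ne' (by linear_combination 2 * h)
  have hprev : ∀ k < m, 2 * ⟪V (k + 1), e k⟫ = -(R * d) := fun k hk => by
    have h := congrArg (⟪·, e k⟫) (hsmul k hk)
    simp only [real_inner_smul_left] at h
    rw [← neg_sub, inner_neg_left, inner_sub_self_of_norm_eq_one (he₁ _) (he₁ _), norm_sub_rev,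
      hchord k hk] at h
    exact mul_left_cancel₀ hd.ne' (by linear_combination 2 * h)
  have hself : ∀ k < m, 2 * ⟪V k, e k⟫ = R * d := fun k hk => by
    rcases k with _ | k
    · rw [← inner_neg_neg, ← he, ← zonogonVertex_self, ← hVdef, ← Nat.sub_add_cancel hk]
      exact hnext (m - 1) (by omega)
    · exact hnext k (by omega)
  intro k hk
  have hedge : ⟪V k, e k⟫ - ⟪V (k + 1), e k⟫ = 2 * r k := by
    rw [← inner_sub_left, hVdef, zonogonVertex_sub_succ]
    simp [real_inner_smul_left, he₁]
  linarith [hself k hk, hprev k hk]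

end Zonogon

section Chords

lemma norm_exp_sub_exp (a b : ℝ) :
    ‖Complex.exp (b * Complex.I) - Complex.exp (a * Complex.I)‖ = 2 * |Real.sin ((b - a) / 2)| := by
  have hfactor : Complex.exp (b * Complex.I) - Complex.exp (a * Complex.I) =
      Complex.exp (a * Complex.I) * (Complex.exp (Complex.I * (b - a : ℝ)) - 1) := by
    rw [mul_sub_one, ← Complex.exp_add]
    push_cast
    ring_nf
  rw [hfactor, norm_mul, Complex.norm_exp_ofReal_mul_I, one_mul,
    Complex.norm_exp_I_mul_ofReal_sub_one, norm_mul, Real.norm_two, Real.norm_eq_abs]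

lemma exp_mul_I_eq_neg_of_eq_add_pi {a b : ℝ} (h : b = a + π) :
    Complex.exp (b * Complex.I) = -Complex.exp (a * Complex.I) := by
  rw [h, Complex.ofReal_add, add_mul, Complex.exp_add, Complex.exp_pi_mul_I, mul_neg_one]

lemma sum_sin_le {ι : Type*} {s : Finset ι} (hs : s.Nonempty) {y : ι → ℝ}
    (hy : ∀ i ∈ s, y i ∈ Set.Icc 0 π) :
    ∑ i ∈ s, Real.sin (y i) ≤ s.card * Real.sin ((∑ i ∈ s, y i) / s.card) := by
  have hcard : (0 : ℝ) < s.card := by exact_mod_cast hs.card_pos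
  have hJensen := strictConcaveOn_sin_Icc.concaveOn.le_map_sum (w := fun _ => (s.card : ℝ)⁻¹)
    (fun _ _ => by positivity) (by simp [hcard.ne']) hy
  simp only [smul_eq_mul, ← Finset.mul_sum] at hJensen
  rwa [inv_mul_le_iff₀ hcard, inv_mul_eq_div] at hJensen

lemma eq_of_sum_sin_eq {ι : Type*} {s : Finset ι} (hs : s.Nonempty) {y : ι → ℝ}
    (hy : ∀ i ∈ s, y i ∈ Set.Icc 0 π)
    (heq : ∑ i ∈ s, Real.sin (y i) = s.card * Real.sin ((∑ i ∈ s, y i) / s.card)) :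
    ∀ i ∈ s, y i = (∑ i ∈ s, y i) / s.card := by
  have hcard : (0 : ℝ) < s.card := by exact_mod_cast hs.card_pos
  have hJensen := (strictConcaveOn_sin_Icc.map_sum_eq_iff (w := fun _ => (s.card : ℝ)⁻¹)
    (fun _ _ => by positivity) (by simp [hcard.ne']) hy).mp (by
      simp only [smul_eq_mul, ← Finset.mul_sum]
      rw [heq, inv_mul_cancel_left₀ hcard.ne', inv_mul_eq_div])
  intro i hi
  simpa only [smul_eq_mul, inv_mul_eq_div, Finset.sum_div] using hJensen i hi

/-- The factor in Reinhardt's inequality `perimeter ≤ 2 m sin (π / (2 m)) · diameter` for convex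
`m`-gons, where it is halved and bounds the half-perimeter of a zonogon by its circumradius. -/
def reinhardtConst (m : ℕ) : ℝ := m * Real.sin (π / (2 * m))

lemma sin_pi_div_two_mul_pos {m : ℕ} (hm : 0 < m) : 0 < Real.sin (π / (2 * m)) := by
  have hm₁ : (1 : ℝ) ≤ m := by exact_mod_cast hm
  exact Real.sin_pos_of_pos_of_lt_pi (by positivity) (div_lt_self pi_pos (by linarith))

lemma one_lt_reinhardtConst {m : ℕ} (hm : 2 ≤ m) : 1 < reinhardtConst m := by
  have hm₂ : (2 : ℝ) ≤ m := by exact_mod_cast hm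
  have hlt : π / (2 * m) < π / 2 := div_lt_div_of_pos_left pi_pos two_pos (by linarith)
  have h := Real.mul_lt_sin (by positivity) hlt
  calc (1 : ℝ) = m * (2 / π * (π / (2 * m))) := by field_simp
    _ < reinhardtConst m := mul_lt_mul_of_pos_left h (by positivity)

variable {m : ℕ} {θ : ℕ → ℝ}

lemma half_sub_mem_Icc (hmono : ∀ k < m, θ k ≤ θ (k + 1)) (hend : θ m = θ 0 + π) :
    ∀ k ∈ Finset.range m, (θ (k + 1) - θ k) / 2 ∈ Set.Icc 0 π := fun k hk => by
  have hnonneg : ∀ j ∈ Finset.range m, 0 ≤ θ (j + 1) - θ j := fun j hj =>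
    sub_nonneg.mpr (hmono j (Finset.mem_range.mp hj))
  have hle := Finset.single_le_sum hnonneg hk
  rw [Finset.sum_range_sub, hend] at hle
  constructor <;> linarith [hnonneg k hk, pi_pos]

lemma sum_norm_exp_sub_exp (hmono : ∀ k < m, θ k ≤ θ (k + 1)) (hend : θ m = θ 0 + π) :
    ∑ k ∈ Finset.range m, ‖Complex.exp (θ (k + 1) * Complex.I) - Complex.exp (θ k * Complex.I)‖ =
      2 * ∑ k ∈ Finset.range m, Real.sin ((θ (k + 1) - θ k) / 2) := by
  rw [Finset.mul_sum]
  refine Finset.sum_congr rfl fun k hk => ?_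
  obtain ⟨h₀, h₁⟩ := half_sub_mem_Icc hmono hend k hk
  rw [norm_exp_sub_exp, abs_of_nonneg (Real.sin_nonneg_of_nonneg_of_le_pi h₀ h₁)]

lemma sum_half_sub_div (hend : θ m = θ 0 + π) :
    (∑ k ∈ Finset.range m, (θ (k + 1) - θ k) / 2) / m = π / (2 * m) := by
  rw [← Finset.sum_div, Finset.sum_range_sub, hend]
  ring

lemma sum_norm_exp_sub_exp_le (hm : 0 < m) (hmono : ∀ k < m, θ k ≤ θ (k + 1))
    (hend : θ m = θ 0 + π) :
    ∑ k ∈ Finset.range m, ‖Complex.exp (θ (k + 1) * Complex.I) - Complex.exp (θ k * Complex.I)‖ ≤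
      2 * reinhardtConst m := by
  have h := sum_sin_le (Finset.nonempty_range_iff.mpr hm.ne') (half_sub_mem_Icc hmono hend)
  rw [Finset.card_range, sum_half_sub_div hend] at h
  rw [sum_norm_exp_sub_exp hmono hend]
  exact mul_le_mul_of_nonneg_left h zero_le_two

lemma sub_eq_of_sum_norm_exp_sub_exp_eq (hm : 0 < m) (hmono : ∀ k < m, θ k ≤ θ (k + 1))
    (hend : θ m = θ 0 + π)
    (heq : ∑ k ∈ Finset.range m,
      ‖Complex.exp (θ (k + 1) * Complex.I) - Complex.exp (θ k * Complex.I)‖ =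
        2 * reinhardtConst m) :
    ∀ k < m, θ (k + 1) - θ k = π / m := fun k hk => by
  rw [sum_norm_exp_sub_exp hmono hend] at heq
  have h := eq_of_sum_sin_eq (Finset.nonempty_range_iff.mpr hm.ne') (half_sub_mem_Icc hmono hend)
    (by rw [Finset.card_range, sum_half_sub_div hend]
        exact mul_left_cancel₀ two_ne_zero heq) k (Finset.mem_range.mpr hk)
  rw [Finset.card_range, sum_half_sub_div hend] at h
  linear_combination 2 * h

end Chords

section ComplexZonogon

variable {m : ℕ} {R : ℝ}

lemma sum_le_mul_reinhardtConst {r θ : ℕ → ℝ} (hm : 0 < m) (hR : 0 ≤ R)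
    (hmono : ∀ k < m, θ k ≤ θ (k + 1)) (hend : θ m = θ 0 + π)
    (hV : ∀ k ≤ m, ‖zonogonVertex m (fun j => r j • Complex.exp (θ j * Complex.I)) k‖ ≤ R) :
    ∑ k ∈ Finset.range m, r k ≤ R * reinhardtConst m := by
  have hdual := two_mul_sum_le_mul_sum_norm_sub (fun k => Complex.norm_exp_ofReal_mul_I _)
    (exp_mul_I_eq_neg_of_eq_add_pi hend) hV
  have hchord := mul_le_mul_of_nonneg_left (sum_norm_exp_sub_exp_le hm hmono hend) hR
  linarith

lemma sub_eq_and_eq_of_sum_eq {r θ : ℕ → ℝ} (hm : 0 < m) (hR : 0 < R)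
    (hmono : ∀ k < m, θ k ≤ θ (k + 1)) (hend : θ m = θ 0 + π)
    (hV : ∀ k ≤ m, ‖zonogonVertex m (fun j => r j • Complex.exp (θ j * Complex.I)) k‖ ≤ R)
    (heq : ∑ k ∈ Finset.range m, r k = R * reinhardtConst m) :
    ∀ k < m, θ (k + 1) - θ k = π / m ∧ r k = R * Real.sin (π / (2 * m)) := by
  have he₁ (k : ℕ) : ‖Complex.exp (θ k * Complex.I)‖ = 1 := Complex.norm_exp_ofReal_mul_I _
  have hdual := two_mul_sum_le_mul_sum_norm_sub he₁ (exp_mul_I_eq_neg_of_eq_add_pi hend) hV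
  have hsum := (sum_norm_exp_sub_exp_le hm hmono hend).antisymm
    (le_of_mul_le_mul_left (by linarith) hR)
  have hstep := sub_eq_of_sum_norm_exp_sub_exp_eq hm hmono hend hsum
  have hsin := sin_pi_div_two_mul_pos hm
  have hchord : ∀ k < m, ‖Complex.exp (θ (k + 1) * Complex.I) - Complex.exp (θ k * Complex.I)‖ =
      2 * Real.sin (π / (2 * m)) := fun k hk => by
    rw [norm_exp_sub_exp, hstep k hk, div_div, mul_comm (m : ℝ), abs_of_pos hsin]
  have hlength := two_mul_eq_of_two_mul_sum_eq (by positivity) he₁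
    (exp_mul_I_eq_neg_of_eq_add_pi hend) hchord hV (by rw [heq, hsum]; ring)
  exact fun k hk => ⟨hstep k hk, by linarith [hlength k hk]⟩

lemma exists_half_plane_polar (z : ℂ) : ∃ ε α : ℝ, (ε = 1 ∨ ε = -1) ∧ α ∈ Set.Icc 0 π ∧
    z = ε • ‖z‖ • Complex.exp (α * Complex.I) := by
  have hz : ‖z‖ • Complex.exp (z.arg * Complex.I) = z := by simp
  rcases le_or_gt 0 z.arg with h | h
  · exact ⟨1, z.arg, .inl rfl, ⟨h, z.arg_le_pi⟩, by rw [hz, one_smul]⟩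
  · refine ⟨-1, z.arg + π, .inr rfl, ⟨by linarith [z.neg_pi_lt_arg], by linarith⟩, ?_⟩
    rw [exp_mul_I_eq_neg_of_eq_add_pi rfl, smul_neg, hz, neg_smul, one_smul, neg_neg]

lemma exists_sorted_polar (hm : 0 < m) (z : Fin m → ℂ) :
    ∃ (σ : Equiv.Perm (Fin m)) (ε : Fin m → ℝ) (r θ : ℕ → ℝ),
      (∀ j, ε j = 1 ∨ ε j = -1) ∧ (∀ k < m, θ k ≤ θ (k + 1)) ∧ θ m = θ 0 + π ∧
      (∀ j : Fin m, r j = ‖z (σ j)‖) ∧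
      ∀ j : Fin m, z (σ j) = ε j • r j • Complex.exp (θ j * Complex.I) := by
  choose ε α hε hα hz using fun j => exists_half_plane_polar (z j)
  let σ := Tuple.sort α
  let r : ℕ → ℝ := Function.extend Fin.val (fun j => ‖z (σ j)‖) 0
  let θ : ℕ → ℝ := Function.extend Fin.val (α ∘ σ) fun _ => α (σ ⟨0, hm⟩) + π
  have hr (j : Fin m) : r j = ‖z (σ j)‖ := Fin.val_injective.extend_apply _ _ j
  have hθ (j : Fin m) : θ j = α (σ j) := Fin.val_injective.extend_apply _ _ j
  have hend : θ m = α (σ ⟨0, hm⟩) + π :=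
    Function.extend_apply' _ _ _ fun ⟨j, hj⟩ => j.isLt.ne hj
  refine ⟨σ, ε ∘ σ, r, θ, fun j => hε _, fun k hk => ?_, ?_, hr, fun j => ?_⟩
  · rw [hθ ⟨k, hk⟩]
    rcases (Nat.succ_le_of_lt hk).lt_or_eq with h | h
    · rw [hθ ⟨k + 1, h⟩]
      exact Tuple.monotone_sort α (Fin.mk_le_mk.mpr k.le_succ)
    · rw [← Nat.succ_eq_add_one, h, hend]
      linarith [(hα (σ ⟨k, hk⟩)).2, (hα (σ ⟨0, hm⟩)).1]
  · rw [hend, hθ ⟨0, hm⟩]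
  · rw [hr, hθ]
    exact hz (σ j)

lemma nonneg_of_sum_abs_inner_le {z : Fin m → ℂ} (hR : ∀ w : ℂ, ∑ j, |⟪z j, w⟫| ≤ R * ‖w‖) :
    0 ≤ R := by
  simpa using (Finset.sum_nonneg fun j _ => abs_nonneg _).trans (hR 1)

lemma exists_sorted_zonogon {z : Fin m → ℂ} (hm : 0 < m)
    (hR : ∀ w : ℂ, ∑ j, |⟪z j, w⟫| ≤ R * ‖w‖) :
    ∃ (σ : Equiv.Perm (Fin m)) (ε : Fin m → ℝ) (r θ : ℕ → ℝ),
      (∀ j, ε j = 1 ∨ ε j = -1) ∧ (∀ k < m, θ k ≤ θ (k + 1)) ∧ θ m = θ 0 + π ∧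
      (∀ k ≤ m, ‖zonogonVertex m (fun j => r j • Complex.exp (θ j * Complex.I)) k‖ ≤ R) ∧
      ∑ k ∈ Finset.range m, r k = ∑ j, ‖z j‖ ∧
      ∀ j : Fin m, z (σ j) = ε j • r j • Complex.exp (θ j * Complex.I) := by
  obtain ⟨σ, ε, r, θ, hε, hmono, hend, hr, hz⟩ := exists_sorted_polar hm z
  refine ⟨σ, ε, r, θ, hε, hmono, hend, fun k hk =>
    norm_zonogonVertex_le (nonneg_of_sum_abs_inner_le hR) (fun w => ?_) hk, ?_, hz⟩
  · rw [Finset.sum_range]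
    refine le_of_eq_of_le ?_ (hR w)
    rw [← Equiv.sum_comp σ fun j => |⟪z j, w⟫|]
    refine Finset.sum_congr rfl fun j _ => ?_
    rw [hz, real_inner_smul_left _ _ (ε j), abs_mul, (abs_eq zero_le_one).mpr (hε j), one_mul]
  · rw [Finset.sum_range, ← Equiv.sum_comp σ fun j => ‖z j‖]
    exact Finset.sum_congr rfl fun j _ => hr j

lemma sum_norm_le_mul_reinhardtConst {z : Fin m → ℂ} (hm : 0 < m)
    (hR : ∀ w : ℂ, ∑ j, |⟪z j, w⟫| ≤ R * ‖w‖) : ∑ j, ‖z j‖ ≤ R * reinhardtConst m := by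
  obtain ⟨σ, ε, r, θ, -, hmono, hend, hV, hsum, -⟩ := exists_sorted_zonogon hm hR
  exact hsum ▸ sum_le_mul_reinhardtConst hm (nonneg_of_sum_abs_inner_le hR) hmono hend hV

lemma exists_regular_of_sum_norm_eq {z : Fin m → ℂ} (hm : 0 < m) (hR₀ : 0 < R)
    (hR : ∀ w : ℂ, ∑ j, |⟪z j, w⟫| ≤ R * ‖w‖) (heq : ∑ j, ‖z j‖ = R * reinhardtConst m) :
    ∃ (ψ : ℝ) (σ : Equiv.Perm (Fin m)) (ε : Fin m → ℝ), (∀ j, ε j = 1 ∨ ε j = -1) ∧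
      ∀ j : Fin m, z (σ j) = (R * Real.sin (π / (2 * m)) * ε j) •
        Complex.exp (((ψ + (j + 1) * π / m : ℝ) : ℂ) * Complex.I) := by
  obtain ⟨σ, ε, r, θ, hε, hmono, hend, hV, hsum, hz⟩ := exists_sorted_zonogon hm hR
  have hreg := sub_eq_and_eq_of_sum_eq hm hR₀ hmono hend hV (hsum.trans heq)
  have hθ : ∀ k ≤ m, θ k = θ 0 + k * π / m := fun k hk => by
    induction k with
    | zero => simp
    | succ k ih =>
      rw [← sub_add_cancel (θ (k + 1)) (θ k), (hreg k hk).1, ih (by omega)]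
      push_cast
      ring
  refine ⟨θ 0 - π / m, σ, ε, hε, fun j => ?_⟩
  rw [hz, (hreg j j.isLt).2, hθ j j.isLt.le, smul_smul, mul_comm (ε j)]
  ring_nf

end ComplexZonogon

section RegularFrame

variable {m : ℕ}

lemma integral_abs_cos_eq_two (a : ℝ) : ∫ x in a..(a + π), |Real.cos x| = 2 := by
  have hperiodic : Function.Periodic (fun x => |Real.cos x|) π := fun x => by
    simp only [Real.cos_add_pi, abs_neg]
  have hnonneg : Set.EqOn (fun x => |Real.cos x|) Real.cos (Set.uIcc (-(π / 2)) (-(π / 2) + π)) :=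
    fun x hx => by
      rw [Set.uIcc_of_le (by linarith [pi_pos])] at hx
      exact abs_of_nonneg (Real.cos_nonneg_of_mem_Icc ⟨hx.1, by linarith [hx.2]⟩)
  rw [hperiodic.intervalIntegral_add_eq a (-(π / 2)), intervalIntegral.integral_congr hnonneg,
    integral_cos, show -(π / 2) + π = π / 2 by ring, Real.sin_neg, Real.sin_pi_div_two]
  norm_num

lemma two_mul_sin_mul_abs_cos_le_integral {h : ℝ} (hh : 0 ≤ h) (v : ℝ) :
    2 * Real.sin h * |Real.cos v| ≤ ∫ x in (v - h)..(v + h), |Real.cos x| := calc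
  2 * Real.sin h * |Real.cos v| ≤ |2 * Real.sin h * Real.cos v| := by
    rw [abs_mul]
    exact mul_le_mul_of_nonneg_right (le_abs_self _) (abs_nonneg _)
  _ = |∫ x in (v - h)..(v + h), Real.cos x| := by
    rw [integral_cos, Real.sin_add, Real.sin_sub]
    ring_nf
  _ ≤ ∫ x in (v - h)..(v + h), |Real.cos x| :=
    intervalIntegral.abs_integral_le_integral_abs (by linarith)

lemma sin_mul_sum_abs_cos_le_one (hm : 0 < m) (φ : ℝ) :
    Real.sin (π / (2 * m)) * ∑ j ∈ Finset.range m, |Real.cos (j * π / m - φ)| ≤ 1 := by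
  let p (j : ℕ) : ℝ := j * π / m - φ - π / (2 * m)
  have hp_succ (j : ℕ) : p (j + 1) = j * π / m - φ + π / (2 * m) := by
    simp only [p]
    push_cast
    field_simp
    ring
  have hp_end : p m = p 0 + π := by
    simp only [p]
    push_cast
    field_simp
    ring
  have hsum : ∑ j ∈ Finset.range m, 2 * Real.sin (π / (2 * m)) * |Real.cos (j * π / m - φ)| ≤ 2 :=
    calc
    _ ≤ ∑ j ∈ Finset.range m, ∫ x in p j..p (j + 1), |Real.cos x| :=
      Finset.sum_le_sum fun j _ => by
        rw [hp_succ]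
        exact two_mul_sin_mul_abs_cos_le_integral (by positivity) _
    _ = 2 := by
      rw [intervalIntegral.sum_integral_adjacent_intervals fun j _ =>
        Real.continuous_cos.abs.intervalIntegrable _ _, hp_end, integral_abs_cos_eq_two]
  rw [← Finset.mul_sum] at hsum
  linarith

lemma inner_exp_mul_I (t : ℝ) (w : ℂ) :
    ⟪Complex.exp (t * Complex.I), w⟫ = ‖w‖ * Real.cos (t - w.arg) := by
  rw [Real.cos_sub, Complex.inner, ← Complex.exp_conj, map_mul, Complex.conj_I, Complex.conj_ofReal,
    mul_neg, ← neg_mul, ← Complex.ofReal_neg, Complex.mul_re, Complex.exp_ofReal_mul_I_re,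
    Complex.exp_ofReal_mul_I_im, Real.cos_neg, Real.sin_neg]
  linear_combination -Real.cos t * w.norm_mul_cos_arg - Real.sin t * w.norm_mul_sin_arg

lemma sin_mul_sum_abs_inner_exp_le (hm : 0 < m) (w : ℂ) :
    Real.sin (π / (2 * m)) *
      ∑ j : Fin m, |⟪Complex.exp ((j * π / m : ℝ) * Complex.I), w⟫| ≤ ‖w‖ := by
  simp only [inner_exp_mul_I, abs_mul, abs_norm, ← Finset.mul_sum]
  rw [mul_left_comm, ← Finset.sum_range fun j => |Real.cos ((j : ℝ) * π / m - w.arg)|]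
  exact mul_le_of_le_one_right (norm_nonneg w) (sin_mul_sum_abs_cos_le_one hm _)

lemma sum_range_mul_neg_one_pow_div_mul_pow {A : Type*} [CommRing A] (ζ : A) {l : ℕ} (hl : 0 < l)
    (k : ℕ) : ∑ j ∈ Finset.range (k * l), (-1) ^ (j / l) * ζ ^ j =
      (∑ q ∈ Finset.range k, (-ζ ^ l) ^ q) * ∑ s ∈ Finset.range l, ζ ^ s := by
  induction k with
  | zero => simp
  | succ k ih =>
    rw [Nat.succ_mul, Finset.sum_range_add, ih, Finset.sum_range_succ, add_mul, add_right_inj,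
      Finset.mul_sum]
    refine Finset.sum_congr rfl fun s hs => ?_
    rw [mul_comm k l, Nat.mul_add_div hl, Nat.div_eq_of_lt (Finset.mem_range.mp hs), add_zero,
      pow_add, pow_mul, neg_pow (ζ ^ l), mul_assoc]

lemma sum_neg_one_pow_div_mul_pow_eq_zero {A : Type*} [CommRing A] [IsDomain A] {ζ : A} {k l : ℕ}
    (hk : Odd k) (hl : 0 < l) (hζ : ζ ^ (k * l) = -1) (hζl : ζ ^ l ≠ -1) :
    ∑ j ∈ Finset.range (k * l), (-1) ^ (j / l) * ζ ^ j = 0 := by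
  have hpow : (-ζ ^ l) ^ k = 1 := by rw [hk.neg_pow, ← pow_mul, mul_comm l, hζ, neg_neg]
  have hgeom : ∑ q ∈ Finset.range k, (-ζ ^ l) ^ q = 0 := by
    have h := geom_sum_mul (-ζ ^ l) k
    rw [hpow, sub_self] at h
    exact (mul_eq_zero.mp h).resolve_right fun h' => hζl (neg_eq_iff_eq_neg.mp (sub_eq_zero.mp h'))
  rw [sum_range_mul_neg_one_pow_div_mul_pow ζ hl, hgeom, zero_mul]

lemma exists_sum_sign_smul_exp_eq_zero (hm : 0 < m) (hodd : ∃ k, Odd k ∧ 1 < k ∧ k ∣ m) :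
    ∃ ε : Fin m → ℝ, (∀ j, ε j = 1 ∨ ε j = -1) ∧
      ∑ j : Fin m, ε j • Complex.exp ((j * π / m : ℝ) * Complex.I) = 0 := by
  obtain ⟨k, hk, hk₁, l, rfl⟩ := hodd
  have hl : 0 < l := Nat.pos_of_mul_pos_left hm
  set ζ : ℂ := Complex.exp (2 * π * Complex.I / (2 * (k * l) : ℕ)) with hζdef
  have hζ : IsPrimitiveRoot ζ (2 * (k * l)) := Complex.isPrimitiveRoot_exp _ (by omega)
  have hζpow : ζ ^ (k * l) = -1 :=
    (hζ.pow (by omega) (mul_comm 2 _)).eq_neg_one_of_two_right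
  have hζl : ζ ^ l ≠ -1 := fun h => by
    have hlt : l < k * l := lt_mul_of_one_lt_left hl hk₁
    exact hlt.ne (hζ.pow_inj (by omega) (by omega) (h.trans hζpow.symm))
  refine ⟨fun j => (-1) ^ ((j : ℕ) / l), fun j => neg_one_pow_eq_or ℝ _, ?_⟩
  rw [← sum_neg_one_pow_div_mul_pow_eq_zero hk hl hζpow hζl, Finset.sum_range]
  refine Finset.sum_congr rfl fun j _ => ?_
  rw [hζdef, ← Complex.exp_nat_mul, Complex.real_smul]
  push_cast
  congr 2
  field_simp

end RegularFrame

section ComplexSquare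

/-- The identification of `ℝ²` with `ℂ`. -/
def planeIso : E2 ≃ₗᵢ[ℝ] ℂ := Complex.orthonormalBasisOneI.repr.symm

lemma planeIso_apply (v : E2) : planeIso v = v 0 + v 1 * Complex.I :=
  Complex.orthonormalBasisOneI_repr_symm_apply v

/-- The squaring map `csq` with values in `ℂ` instead of `ℝ²`. -/
def csqComplex (v : E2) : ℂ := planeIso v ^ 2

lemma csq_eq_vec2 (v : E2) : csq v = vec2 (csqComplex v).re (csqComplex v).im := by
  rw [csq, csqComplex, planeIso_apply, ← Complex.mk_eq_add_mul_I]
  simp only [sq, Complex.mul_re, Complex.mul_im, toFun2, WithLp.equiv_apply]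
  ring_nf

lemma csqComplex_surjective : Function.Surjective csqComplex := fun w => by
  obtain ⟨s, hs⟩ := IsAlgClosed.exists_pow_nat_eq w two_pos
  exact ⟨planeIso.symm s, by rw [csqComplex, LinearIsometryEquiv.apply_symm_apply, hs]⟩

lemma norm_csqComplex (v : E2) : ‖csqComplex v‖ = ‖v‖ ^ 2 := by
  rw [csqComplex, norm_pow, LinearIsometryEquiv.norm_map]

lemma two_mul_sq_inner (a u : E2) :
    2 * ⟪a, u⟫ ^ 2 = ‖csqComplex a‖ * ‖u‖ ^ 2 + ⟪csqComplex a, csqComplex u⟫ := by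
  rw [← norm_csqComplex u, ← planeIso.inner_map_map, csqComplex, csqComplex, norm_pow, norm_pow,
    Complex.sq_norm, Complex.sq_norm]
  simp only [Complex.inner, sq, map_mul, Complex.mul_re, Complex.mul_im, Complex.conj_re,
    Complex.conj_im, Complex.normSq_apply]
  ring

end ComplexSquare

section Lipschitz

variable {m : ℕ} {a : Fin m → E2}

/-- The squared distance `‖PhiMap a x - PhiMap a y‖ ^ 2` as a function of `u = x - y` and
`v = x + y`. -/
def minEnergy (a : Fin m → E2) (u v : E2) : ℝ := ∑ j, min (⟪a j, u⟫ ^ 2) (⟪a j, v⟫ ^ 2)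

lemma minEnergy_nonneg (a : Fin m → E2) (u v : E2) : 0 ≤ minEnergy a u v :=
  Finset.sum_nonneg fun _ _ => le_min (sq_nonneg _) (sq_nonneg _)

lemma two_mul_min (p q : ℝ) : 2 * min p q = p + q - |p - q| := by
  linarith [min_add_max p q, max_sub_min_eq_abs' p q]

lemma sq_abs_sub_abs (p q : ℝ) : (|p| - |q|) ^ 2 = min ((p - q) ^ 2) ((p + q) ^ 2) := by
  have hmin := two_mul_min ((p - q) ^ 2) ((p + q) ^ 2)
  rw [show (p - q) ^ 2 - (p + q) ^ 2 = -4 * (p * q) by ring, abs_mul, abs_neg, abs_of_pos four_pos,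
    abs_mul] at hmin
  linear_combination sq_abs p + sq_abs q - hmin / 2

lemma norm_PhiMap_sub_sq (a : Fin m → E2) (x y : E2) :
    ‖PhiMap a x - PhiMap a y‖ ^ 2 = minEnergy a (x - y) (x + y) := by
  rw [EuclideanSpace.real_norm_sq_eq]
  refine Finset.sum_congr rfl fun j _ => ?_
  rw [inner_sub_right, inner_add_right]
  exact sq_abs_sub_abs _ _

lemma mem_ratioSet_iff {r : ℝ} : r ∈ ratioSet a ↔
    ∃ u v : E2, u ≠ 0 ∧ v ≠ 0 ∧ r = √(minEnergy a u v) / min ‖u‖ ‖v‖ := by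
  have hne {u v : E2} : min ‖u‖ ‖v‖ ≠ 0 ↔ u ≠ 0 ∧ v ≠ 0 := by
    rw [← (le_min (norm_nonneg u) (norm_nonneg v)).lt_iff_ne', lt_min_iff, norm_pos_iff,
      norm_pos_iff]
  have hsqrt (x y : E2) : ‖PhiMap a x - PhiMap a y‖ = √(minEnergy a (x - y) (x + y)) := by
    rw [← norm_PhiMap_sub_sq, Real.sqrt_sq (norm_nonneg _)]
  constructor
  · rintro ⟨x, y, hxy, rfl⟩
    exact ⟨x - y, x + y, (hne.mp hxy).1, (hne.mp hxy).2, by rw [hsqrt, pdist]⟩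
  · rintro ⟨u, v, hu, hv, rfl⟩
    have hsub : (2⁻¹ : ℝ) • (u + v) - (2⁻¹ : ℝ) • (v - u) = u := by module
    have hadd : (2⁻¹ : ℝ) • (u + v) + (2⁻¹ : ℝ) • (v - u) = v := by module
    refine ⟨(2⁻¹ : ℝ) • (u + v), (2⁻¹ : ℝ) • (v - u), ?_, ?_⟩
    · rw [pdist, hsub, hadd]
      exact hne.mpr ⟨hu, hv⟩
    · rw [hsqrt, pdist, hsub, hadd]

lemma ratioSet_nonneg {r : ℝ} (hr : r ∈ ratioSet a) : 0 ≤ r := by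
  obtain ⟨u, v, -, -, rfl⟩ := mem_ratioSet_iff.mp hr
  positivity

lemma lipL_nonneg : 0 ≤ lipL a := Real.sInf_nonneg fun _ => ratioSet_nonneg

lemma lipU_nonneg : 0 ≤ lipU a := Real.sSup_nonneg fun _ => ratioSet_nonneg

lemma sqrt_minEnergy_div_mem_ratioSet {u v : E2} (hu : u ≠ 0) (huv : ‖u‖ = ‖v‖) :
    √(minEnergy a u v) / ‖u‖ ∈ ratioSet a := by
  have hv : v ≠ 0 := norm_pos_iff.mp (huv ▸ norm_pos_iff.mpr hu)
  exact mem_ratioSet_iff.mpr ⟨u, v, hu, hv, by rw [← huv, min_self]⟩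

lemma lipL_sq_mul_le_minEnergy {u v : E2} (huv : ‖u‖ = ‖v‖) :
    lipL a ^ 2 * ‖u‖ ^ 2 ≤ minEnergy a u v := by
  rcases eq_or_ne u 0 with rfl | hu
  · simpa using minEnergy_nonneg a 0 v
  · have h : lipL a ≤ √(minEnergy a u v) / ‖u‖ :=
      csInf_le ⟨0, fun _ => ratioSet_nonneg⟩ (sqrt_minEnergy_div_mem_ratioSet hu huv)
    rw [← mul_pow]
    exact (Real.le_sqrt (mul_nonneg lipL_nonneg (norm_nonneg u)) (minEnergy_nonneg a u v)).mp
      ((le_div_iff₀ (norm_pos_iff.mpr hu)).mp h)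

lemma four_mul_minEnergy {u v : E2} (huv : ‖u‖ = ‖v‖) :
    4 * minEnergy a u v = 2 * ‖u‖ ^ 2 * ∑ j, ‖csqComplex (a j)‖ +
      ⟪∑ j, csqComplex (a j), csqComplex u + csqComplex v⟫ -
      ∑ j, |⟪csqComplex (a j), csqComplex u - csqComplex v⟫| := by
  rw [minEnergy, sum_inner, Finset.mul_sum, Finset.mul_sum, ← Finset.sum_add_distrib,
    ← Finset.sum_sub_distrib]
  refine Finset.sum_congr rfl fun j _ => ?_
  have hu := two_mul_sq_inner (a j) u
  have hv := two_mul_sq_inner (a j) v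
  rw [← huv] at hv
  have hdiff : |⟪csqComplex (a j), csqComplex u - csqComplex v⟫| =
      2 * |⟪a j, u⟫ ^ 2 - ⟪a j, v⟫ ^ 2| := by
    have h : ⟪csqComplex (a j), csqComplex u⟫ - ⟪csqComplex (a j), csqComplex v⟫ =
        2 * (⟪a j, u⟫ ^ 2 - ⟪a j, v⟫ ^ 2) := by linear_combination hv - hu
    rw [inner_sub_right, h, abs_mul, abs_two]
  rw [hdiff, inner_add_right]
  linear_combination hu + hv + 2 * two_mul_min (⟪a j, u⟫ ^ 2) (⟪a j, v⟫ ^ 2)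

lemma two_mul_minEnergy_self (u : E2) :
    2 * minEnergy a u u =
      ‖u‖ ^ 2 * ∑ j, ‖csqComplex (a j)‖ + ⟪∑ j, csqComplex (a j), csqComplex u⟫ := by
  have h := four_mul_minEnergy (a := a) (u := u) rfl
  simp only [sub_self, inner_zero_right, abs_zero, Finset.sum_const_zero, inner_add_right] at h
  linarith

lemma two_mul_minEnergy_le (u v : E2) :
    2 * minEnergy a u v ≤
      (∑ j, ‖csqComplex (a j)‖ + ‖∑ j, csqComplex (a j)‖) * min ‖u‖ ‖v‖ ^ 2 := by
  have hself (w : E2) : 2 * minEnergy a w w ≤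
      (∑ j, ‖csqComplex (a j)‖ + ‖∑ j, csqComplex (a j)‖) * ‖w‖ ^ 2 := by
    have h := real_inner_le_norm (∑ j, csqComplex (a j)) (csqComplex w)
    rw [norm_csqComplex] at h
    rw [two_mul_minEnergy_self]
    linarith
  rcases le_total ‖u‖ ‖v‖ with h | h
  · rw [min_eq_left h]
    refine le_trans ?_ (hself u)
    simp only [minEnergy, min_self]
    gcongr
    exact min_le_left _ _
  · rw [min_eq_right h]
    refine le_trans ?_ (hself v)
    simp only [minEnergy, min_self]
    gcongr
    exact min_le_right _ _

lemma two_mul_lipU_sq (a : Fin m → E2) :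
    2 * lipU a ^ 2 = ∑ j, ‖csqComplex (a j)‖ + ‖∑ j, csqComplex (a j)‖ := by
  set C := ∑ j, ‖csqComplex (a j)‖ + ‖∑ j, csqComplex (a j)‖
  have hC₀ : 0 ≤ C / 2 := by positivity
  have hupper : ∀ r ∈ ratioSet a, r ≤ √(C / 2) := fun r hr => by
    obtain ⟨u, v, hu, hv, rfl⟩ := mem_ratioSet_iff.mp hr
    have hpos : 0 < min ‖u‖ ‖v‖ := lt_min (norm_pos_iff.mpr hu) (norm_pos_iff.mpr hv)
    refine Real.le_sqrt_of_sq_le ?_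
    rw [div_pow, Real.sq_sqrt (minEnergy_nonneg a u v), div_le_iff₀ (pow_pos hpos 2)]
    linarith [two_mul_minEnergy_le (a := a) u v]
  apply le_antisymm
  · have h : lipU a ≤ √(C / 2) := Real.sSup_le hupper (Real.sqrt_nonneg _)
    linarith [(Real.le_sqrt lipU_nonneg hC₀).mp h]
  · obtain ⟨u, hu⟩ :=
      csqComplex_surjective (Complex.exp ((∑ j, csqComplex (a j)).arg * Complex.I))
    have hu₁ : ‖u‖ = 1 := by
      rw [← sq_eq_sq₀ (norm_nonneg u) zero_le_one, ← norm_csqComplex, hu,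
        Complex.norm_exp_ofReal_mul_I, one_pow]
    have hu₀ : u ≠ 0 := norm_ne_zero_iff.mp (hu₁ ▸ one_ne_zero)
    have h : √(minEnergy a u u) / ‖u‖ ≤ lipU a :=
      le_csSup ⟨_, hupper⟩ (sqrt_minEnergy_div_mem_ratioSet hu₀ rfl)
    rw [hu₁, div_one, Real.sqrt_le_left lipU_nonneg] at h
    have henergy := two_mul_minEnergy_self (a := a) u
    rw [hu₁, hu, real_inner_comm, inner_exp_mul_I, sub_self, Real.cos_zero] at henergy
    linarith

lemma sum_abs_inner_csqComplex_le (a : Fin m → E2) (w : ℂ) :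
    ∑ j, |⟪csqComplex (a j), w⟫| ≤ (∑ j, ‖csqComplex (a j)‖ - 2 * lipL a ^ 2) * ‖w‖ := by
  obtain ⟨u, hu⟩ := csqComplex_surjective w
  obtain ⟨v, hv⟩ := csqComplex_surjective (-w)
  have huw : ‖u‖ ^ 2 = ‖w‖ := by rw [← norm_csqComplex, hu]
  have huv : ‖u‖ = ‖v‖ := by
    rw [← sq_eq_sq₀ (norm_nonneg u) (norm_nonneg v), huw, ← norm_csqComplex, hv, norm_neg]
  have henergy := four_mul_minEnergy (a := a) huv
  simp only [hu, hv, add_neg_cancel, inner_zero_right, sub_neg_eq_add, ← two_smul ℝ w,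
    real_inner_smul_right, abs_mul, abs_two, ← Finset.mul_sum, huw] at henergy
  have hlip := lipL_sq_mul_le_minEnergy (a := a) huv
  rw [huw] at hlip
  linarith

lemma min_norm_sq_mul_minEnergy_le (a : Fin m → E2) (u v : E2) :
    min ‖u‖ ‖v‖ ^ 2 * minEnergy a (‖u‖⁻¹ • u) (‖v‖⁻¹ • v) ≤ minEnergy a u v := by
  have hscale (b w : E2) : ‖w‖ ^ 2 * ⟪b, ‖w‖⁻¹ • w⟫ ^ 2 = ⟪b, w⟫ ^ 2 := by
    rcases eq_or_ne w 0 with rfl | hw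
    · simp
    · rw [real_inner_smul_right, mul_pow, inv_pow, mul_inv_cancel_left₀ (by positivity)]
  rw [minEnergy, Finset.mul_sum]
  refine Finset.sum_le_sum fun j _ => ?_
  rw [mul_min_of_nonneg _ _ (sq_nonneg _), ← hscale (a j) u, ← hscale (a j) v]
  gcongr
  exacts [min_le_left _ _, min_le_right _ _]

lemma sub_le_two_mul_minEnergy {R : ℝ} (hsum : ∑ j, csqComplex (a j) = 0)
    (hR : ∀ w : ℂ, ∑ j, |⟪csqComplex (a j), w⟫| ≤ R * ‖w‖) {u v : E2} (hu : ‖u‖ = 1)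
    (hv : ‖v‖ = 1) : ∑ j, ‖csqComplex (a j)‖ - R ≤ 2 * minEnergy a u v := by
  have hR₀ : 0 ≤ R := nonneg_of_sum_abs_inner_le hR
  have hnorm : ‖csqComplex u - csqComplex v‖ ≤ 2 := by
    have h := norm_sub_le (csqComplex u) (csqComplex v)
    rw [norm_csqComplex, norm_csqComplex, hu, hv] at h
    linarith
  have hsep := (hR (csqComplex u - csqComplex v)).trans (mul_le_mul_of_nonneg_left hnorm hR₀)
  have henergy := four_mul_minEnergy (a := a) (hu.trans hv.symm)
  rw [hsum, inner_zero_left, hu] at henergy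
  linarith

lemma sub_le_two_mul_lipL_sq {R : ℝ} (hsum : ∑ j, csqComplex (a j) = 0)
    (hR : ∀ w : ℂ, ∑ j, |⟪csqComplex (a j), w⟫| ≤ R * ‖w‖) :
    ∑ j, ‖csqComplex (a j)‖ - R ≤ 2 * lipL a ^ 2 := by
  set D := ∑ j, ‖csqComplex (a j)‖ - R
  have hlower : ∀ r ∈ ratioSet a, √(D / 2) ≤ r := fun r hr => by
    rw [Real.sqrt_le_left (ratioSet_nonneg hr)]
    obtain ⟨u, v, hu, hv, rfl⟩ := mem_ratioSet_iff.mp hr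
    have hpos : 0 < min ‖u‖ ‖v‖ := lt_min (norm_pos_iff.mpr hu) (norm_pos_iff.mpr hv)
    rw [div_pow, Real.sq_sqrt (minEnergy_nonneg a u v), le_div_iff₀ (pow_pos hpos 2), mul_comm]
    refine le_trans ?_ (min_norm_sq_mul_minEnergy_le a u v)
    have hunit := sub_le_two_mul_minEnergy hsum hR (norm_smul_inv_norm (𝕜 := ℝ) hu)
      (norm_smul_inv_norm (𝕜 := ℝ) hv)
    simp only [RCLike.ofReal_real_eq_id, id] at hunit
    gcongr
    linarith
  have hnonempty : (ratioSet a).Nonempty :=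
    let ⟨_, hu⟩ := exists_ne (0 : E2)
    ⟨_, sqrt_minEnergy_div_mem_ratioSet hu rfl⟩
  have h : √(D / 2) ≤ lipL a := le_csInf hnonempty hlower
  linarith [(Real.sqrt_le_left lipL_nonneg).mp h]

end Lipschitz

section Optimality

variable {m : ℕ} {a : Fin m → E2}

/-- The least condition number of `m` vectors in the plane when `m` has an odd factor. -/
def optCondNum (m : ℕ) : ℝ := √(reinhardtConst m / (reinhardtConst m - 1))

lemma condNum_le_optCondNum_iff (hm : 2 ≤ m) :
    condNum a ≤ ENNReal.ofReal (optCondNum m) ↔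
      0 < lipL a ∧ (reinhardtConst m - 1) * lipU a ^ 2 ≤ reinhardtConst m * lipL a ^ 2 := by
  have hκ : 0 < reinhardtConst m - 1 := sub_pos.mpr (one_lt_reinhardtConst hm)
  rcases (lipL_nonneg (a := a)).eq_or_lt with hL | hL
  · simp [condNum, ← hL]
  · rw [condNum, if_neg hL.ne', optCondNum, ENNReal.ofReal_le_ofReal_iff (Real.sqrt_nonneg _),
      Real.le_sqrt (div_nonneg lipU_nonneg hL.le) (div_nonneg (by linarith) hκ.le), div_pow,
      div_le_div_iff₀ (pow_pos hL 2) hκ, mul_comm (lipU a ^ 2)]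
    exact (and_iff_right hL).symm

lemma exists_condNum_le_optCondNum (hm : 2 ≤ m) (hodd : ∃ k, Odd k ∧ 1 < k ∧ k ∣ m) :
    ∃ M : Fin m → E2, condNum M ≤ ENNReal.ofReal (optCondNum m) := by
  have hm₀ : 0 < m := by omega
  have hsin := sin_pi_div_two_mul_pos hm₀
  obtain ⟨ε, hε, hbalanced⟩ := exists_sum_sign_smul_exp_eq_zero hm₀ hodd
  choose M hM using fun j : Fin m =>
    csqComplex_surjective (ε j • Complex.exp ((j * π / m : ℝ) * Complex.I))
  have hε₁ (j : Fin m) : |ε j| = 1 := (abs_eq zero_le_one).mpr (hε j)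
  have hsum : ∑ j, csqComplex (M j) = 0 := by rw [← hbalanced, funext hM]
  have hnorm : ∑ j, ‖csqComplex (M j)‖ = m := by
    simp [hM, hε₁, -Complex.ofReal_div, -Complex.ofReal_mul]
  have hframe : ∀ w : ℂ, ∑ j, |⟪csqComplex (M j), w⟫| ≤ (Real.sin (π / (2 * m)))⁻¹ * ‖w‖ :=
    fun w => by
      simp only [hM, real_inner_smul_left, abs_mul, hε₁, one_mul]
      rw [le_inv_mul_iff₀ hsin]
      exact sin_mul_sum_abs_inner_exp_le hm₀ w
  have hU := two_mul_lipU_sq M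
  rw [hsum, norm_zero, add_zero, hnorm] at hU
  have hL := sub_le_two_mul_lipL_sq hsum hframe
  rw [hnorm] at hL
  have hκ := one_lt_reinhardtConst hm
  have hκL : m * (reinhardtConst m - 1) ≤ reinhardtConst m * (2 * lipL M ^ 2) := by
    refine le_of_eq_of_le ?_ (mul_le_mul_of_nonneg_left hL (by linarith))
    rw [reinhardtConst]
    linear_combination (m : ℝ) * mul_inv_cancel₀ hsin.ne'
  refine ⟨M, (condNum_le_optCondNum_iff hm).mpr ⟨lipL_nonneg.lt_of_ne' fun h => ?_, ?_⟩⟩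
  · have : 0 < m * (reinhardtConst m - 1) := mul_pos (by positivity) (by linarith)
    rw [h] at hκL
    linarith
  · linear_combination hκL / 2 + (reinhardtConst m - 1) / 2 * hU

lemma sum_eq_zero_and_sum_norm_eq (hm : 2 ≤ m)
    (ha : condNum a ≤ ENNReal.ofReal (optCondNum m)) :
    ∑ j, csqComplex (a j) = 0 ∧ 0 < ∑ j, ‖csqComplex (a j)‖ - 2 * lipL a ^ 2 ∧
      ∑ j, ‖csqComplex (a j)‖ =
        (∑ j, ‖csqComplex (a j)‖ - 2 * lipL a ^ 2) * reinhardtConst m := by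
  obtain ⟨hL, hUL⟩ := (condNum_le_optCondNum_iff hm).mp ha
  have hκ := one_lt_reinhardtConst hm
  have hframe := sum_abs_inner_csqComplex_le a
  have hzonogon := sum_norm_le_mul_reinhardtConst (by omega) hframe
  have hU := two_mul_lipU_sq a
  set P := ∑ j, ‖csqComplex (a j)‖
  set Z := ∑ j, csqComplex (a j)
  have hbound : (P - 2 * lipL a ^ 2) * reinhardtConst m ≤ P - (reinhardtConst m - 1) * ‖Z‖ := by
    linear_combination 2 * hUL - (reinhardtConst m - 1) * hU
  have hR : 0 ≤ P - 2 * lipL a ^ 2 := nonneg_of_sum_abs_inner_le hframe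
  have hZ : ‖Z‖ = 0 := by
    have : (reinhardtConst m - 1) * ‖Z‖ ≤ 0 := by linarith
    nlinarith [norm_nonneg Z]
  have heq : P = (P - 2 * lipL a ^ 2) * reinhardtConst m := by
    rw [hZ, mul_zero, sub_zero] at hbound
    exact hzonogon.antisymm hbound
  have hP : 0 < P := by linarith [pow_pos hL 2]
  exact ⟨norm_eq_zero.mp hZ, pos_of_mul_pos_left (heq ▸ hP) (by linarith), heq⟩

end Optimality

section Rigidity

variable {m : ℕ} {a : Fin m → E2}

lemma csq_eq_smul_vec2 {v : E2} {s t : ℝ} (h : csqComplex v = s • Complex.exp (t * Complex.I)) :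
    csq v = s • vec2 (Real.cos t) (Real.sin t) := by
  rw [csq_eq_vec2, h, Complex.smul_re, Complex.smul_im, Complex.exp_ofReal_mul_I_re,
    Complex.exp_ofReal_mul_I_im, vec2, vec2, WithLp.equiv_symm_apply, ← WithLp.toLp_smul,
    Matrix.smul_cons, Matrix.smul_cons, Matrix.smul_empty]

lemma smul_exp_add_mul_div (c ε ψ : ℝ) (k : ℕ) :
    (c * ε) • Complex.exp (((ψ + (k + 1) * π / m : ℝ) : ℂ) * Complex.I) =
      c * Complex.exp (ψ * Complex.I) * (ε * Complex.exp (π * Complex.I / m) ^ (k + 1)) := by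
  rw [← Complex.exp_nat_mul, Complex.real_smul, Complex.ofReal_mul, mul_assoc, mul_assoc,
    mul_left_comm (Complex.exp _), ← Complex.exp_add]
  push_cast
  ring_nf

lemma exists_regular_of_condNum_le (hm : 2 ≤ m)
    (ha : condNum a ≤ ENNReal.ofReal (optCondNum m)) :
    ∃ (c ψ : ℝ) (σ : Equiv.Perm (Fin m)) (ε : Fin m → ℝ), 0 < c ∧ (∀ j, ε j = 1 ∨ ε j = -1) ∧
      ∑ j : Fin m, (ε j : ℂ) * Complex.exp (π * Complex.I / m) ^ ((j : ℕ) + 1) = 0 ∧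
      ∀ j : Fin m, csqComplex (a (σ j)) =
        (c * ε j) • Complex.exp (((ψ + (j + 1) * π / m : ℝ) : ℂ) * Complex.I) := by
  have hm₀ : 0 < m := by omega
  obtain ⟨hsum, hR₀, heq⟩ := sum_eq_zero_and_sum_norm_eq hm ha
  obtain ⟨ψ, σ, ε, hε, hz⟩ :=
    exists_regular_of_sum_norm_eq hm₀ hR₀ (sum_abs_inner_csqComplex_le a) heq
  have hc := mul_pos hR₀ (sin_pi_div_two_mul_pos hm₀)
  refine ⟨_, ψ, σ, ε, hc, hε, ?_, hz⟩
  rw [← Equiv.sum_comp σ, Finset.sum_congr rfl fun j _ => (hz j).trans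
    (smul_exp_add_mul_div _ (ε j) ψ j), ← Finset.mul_sum] at hsum
  exact (mul_eq_zero.mp hsum).resolve_left
    (mul_ne_zero (Complex.ofReal_ne_zero.mpr hc.ne') (Complex.exp_ne_zero _))

end Rigidity

theorem stmt17_general {m : ℕ} (hm : 0 < m) (hodd : ∃ k, Odd k ∧ 1 < k ∧ k ∣ m)
    (a : Fin m → E2) (hopt : condNum a = ⨅ M : Fin m → E2, condNum M) :
    ∃ c : ℝ, 0 < c ∧ ∃ φ : ℝ, ∃ σ : Equiv.Perm (Fin m), ∃ ε : Fin m → ℝ,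
      (∀ j, ε j = 1 ∨ ε j = -1) ∧
      (∑ j : Fin m, (ε j : ℂ) * Complex.exp (π * Complex.I / m) ^ ((j : ℕ) + 1) = 0) ∧
      ∀ j : Fin m, csq (a (σ j)) =
        (c * ε j) • vec2 (Real.cos (2 * φ + ((j : ℕ) + 1) * π / m))
          (Real.sin (2 * φ + ((j : ℕ) + 1) * π / m)) := by
  have hm₂ : 2 ≤ m := by
    obtain ⟨k, -, hk, hkm⟩ := hodd
    exact hk.trans_le (Nat.le_of_dvd hm hkm)
  obtain ⟨M, hM⟩ := exists_condNum_le_optCondNum hm₂ hodd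
  obtain ⟨c, ψ, σ, ε, hc, hε, hbalanced, hz⟩ :=
    exists_regular_of_condNum_le hm₂ (hopt ▸ (iInf_le _ M).trans hM)
  refine ⟨c, hc, ψ / 2, σ, ε, hε, hbalanced, fun j => ?_⟩
  rw [mul_div_cancel₀ ψ two_ne_zero]
  exact csq_eq_smul_vec2 (hz j)

/-- If `m ≥ 3` has an odd factor and `a_1,…,a_m` lie in the upper
half-plane `T` and form an optimal frame, then there are `c > 0`, `φ ∈ ℝ`, a permutation
`σ`, and signs `ε ∈ {±1}^m` with `∑ ε_j e^{ijπ/m} = 0` such that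
`f(a_{σ(j)}) = c·ε_j·(cos(2φ + jπ/m), sin(2φ + jπ/m))` for all `j`. -/
theorem stmt17 {m : ℕ} (hm : 3 ≤ m) (hodd : ∃ k, Odd k ∧ 1 < k ∧ k ∣ m)
    (a : Fin m → E2)
    (hT : ∀ j, ∃ t φ : ℝ, 0 ≤ t ∧ 0 < φ ∧ φ ≤ π ∧
      a j = t • vec2 (Real.cos φ) (Real.sin φ))
    (hopt : condNum a = ⨅ M : Fin m → E2, condNum M) :
    ∃ c : ℝ, 0 < c ∧ ∃ φ : ℝ, ∃ σ : Equiv.Perm (Fin m), ∃ ε : Fin m → ℝ,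
      (∀ j, ε j = 1 ∨ ε j = -1) ∧
      (∑ j : Fin m, (ε j : ℂ) * Complex.exp (π * Complex.I / m) ^ ((j : ℕ) + 1) = 0) ∧
      ∀ j : Fin m, csq (a (σ j)) =
        (c * ε j) • vec2 (Real.cos (2 * φ + ((j : ℕ) + 1) * π / m))
          (Real.sin (2 * φ + ((j : ℕ) + 1) * π / m)) :=
  stmt17_general (by omega) hodd a hopt
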